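/- arXiv:2307.07014 — 3 statements merged into one kernel-verified Lean document; each statement's English description precedes it below -/
import Mathlib

section
/- Let M be a D-factored finite MDP and let π be a factored policy with sub-policies π_d. Then for every k ∈ ℕ, every state s = (z_1, …, z_D) and every action a = (a_1, …, a_D), the k-step Q-function decomposes additively across factors: Q^k_π(s, a) = Σ_{d=1}^D Q^{(d),k}_{π_d}(z_d, a_d), where Q^{(d),k} denotes the k-step Q-function of the d-th sub-MDP (Z_d, A_d, p_d, r_d) with the same discount γ under sub-policy π_d. -/
/-! The proof is by induction on `k`. By the induction hypothesis the inner function is a sum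
of functions of one coordinate each, and it is averaged first over actions and then over states
against product weights. Averaging `∑ d, f d (x d)` against a product of weights of total mass one only
sees the marginals (`sum_prod_mul_sum`): in the term for coordinate `e`, the weights of all other
coordinates sum to one. Applying this twice leaves the sum over `d` of the recursions of the
sub-MDPs. -/

open scoped BigOperators

/-- The `k`-step Q-function of a finite MDP with transition kernel `p`, reward `r`,
discount `γ`, under policy `π`, defined by the recursion
`Q^0 = 0`, `Q^{k+1}(s,a) = r(s,a) + γ ∑_{s'} p(s'|s,a) ∑_{a'} π(a'|s') Q^k(s',a')`. -/
def Qk {S A : Type} [Fintype S] [Fintype A]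
    (p : S → A → S → ℝ) (r : S → A → ℝ) (γ : ℝ) (π : S → A → ℝ) : ℕ → S → A → ℝ
  | 0 => fun _ _ => 0
  | (k + 1) => fun s a =>
      r s a + γ * ∑ s' : S, p s a s' * ∑ a' : A, π s' a' * Qk p r γ π k s' a'

/-- The weighted sum of a sum of one-coordinate functions, against a product of weights each of
total mass one (nonnegativity is not needed), is
the sum of the weighted sums over the single coordinates. -/
theorem sum_prod_mul_sum {ι : Type} [Fintype ι] [DecidableEq ι] {X : ι → Type}
    [∀ i, Fintype (X i)] (w f : ∀ i, X i → ℝ) (hw : ∀ i, ∑ y, w i y = 1) :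
    ∑ x : (∀ i, X i), (∏ i, w i (x i)) * ∑ i, f i (x i) = ∑ i, ∑ y, w i y * f i y := by
  simp_rw [Finset.mul_sum]
  rw [Finset.sum_comm]
  refine Finset.sum_congr rfl fun e _ => ?_
  -- Absorb `f e` into the `e`-th weight, so that the summand is again a product over coordinates.
  have key : ∀ x : (∀ i, X i), (∏ i, w i (x i)) * f e (x e)
      = ∏ i, (w i (x i) * if i = e then f i (x i) else 1) := by
    intro x
    rw [Finset.prod_mul_distrib, Fintype.prod_ite_eq']
  simp_rw [key]
  rw [← Fintype.prod_sum fun i y => w i y * if i = e then f i y else 1]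
  rw [Fintype.prod_eq_single e]
  · simp
  · intro i hi
    simp [hi, hw]

/-- In a `D`-factored finite MDP with a factored policy, the `k`-step
Q-function decomposes additively across factors:
`Q^k_π(s, a) = ∑_{d} Q^{(d),k}_{π_d}(z_d, a_d)`. -/
theorem decomposed_Qk_of_factored
    {D : ℕ} (Z Act : Fin D → Type)
    [∀ d, Fintype (Z d)] [∀ d, Fintype (Act d)]
    [∀ d, Nonempty (Z d)] [∀ d, Nonempty (Act d)]
    -- full MDP data
    (p : (∀ d, Z d) → (∀ d, Act d) → (∀ d, Z d) → ℝ)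
    (r : (∀ d, Z d) → (∀ d, Act d) → ℝ)
    (γ : ℝ) (hγ0 : 0 ≤ γ) (hγ1 : γ ≤ 1)
    -- sub-MDP data
    (pd : ∀ d, Z d → Act d → Z d → ℝ)
    (rd : ∀ d, Z d → Act d → ℝ)
    (hpd_nonneg : ∀ d z a z', 0 ≤ pd d z a z')
    (hpd_sum : ∀ d z a, ∑ z', pd d z a z' = 1)
    -- factorization of the MDP
    (hp : ∀ s a s', p s a s' = ∏ d, pd d (s d) (a d) (s' d))
    (hr : ∀ s a, r s a = ∑ d, rd d (s d) (a d))
    -- factored policy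
    (π : (∀ d, Z d) → (∀ d, Act d) → ℝ)
    (πd : ∀ d, Z d → Act d → ℝ)
    (hπd_nonneg : ∀ d z a, 0 ≤ πd d z a)
    (hπd_sum : ∀ d z, ∑ a, πd d z a = 1)
    (hπ : ∀ s a, π s a = ∏ d, πd d (s d) (a d))
    -- conclusion
    (k : ℕ) (s : ∀ d, Z d) (a : ∀ d, Act d) :
    Qk p r γ π k s a = ∑ d, Qk (pd d) (rd d) γ (πd d) k (s d) (a d) := by
  induction k generalizing s a with
  | zero => simp [Qk]
  | succ k ih =>
    simp only [Qk, ih, hp, hr, hπ]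
    have inner (s' : ∀ d, Z d) := sum_prod_mul_sum (fun d => πd d (s' d))
      (fun d y => Qk (pd d) (rd d) γ (πd d) k (s' d) y) (fun d => hπd_sum d _)
    simp only [inner]
    rw [sum_prod_mul_sum (fun d z => pd d (s d) (a d) z)
      (fun d z => ∑ y, πd d z y * Qk (pd d) (rd d) γ (πd d) k z y)
      (fun d => hpd_sum d _ _)]
    rw [Finset.mul_sum, Finset.sum_add_distrib]
end

section
/- Let M be a D-factored finite MDP and let π_b, π_e be factored policies satisfying per-factor absolute continuity. Let τ^(1), …, τ^(N) be i.i.d. T-step trajectories drawn from the trajectory distribution P^τ_{π_b}. Then the decomposed importance-sampling estimator is unbiased for the value of π_e: E[ Σ_{d=1}^D (1/N) Σ_{n=1}^N ρ^d_{0:T-1}(τ^(n)) · Σ_{t=0}^{T-1} γ^t r_d(z^{(n),d}_t, a^{(n),d}_t) ] = V_{π_e} = E_{τ∼P^τ_{π_e}}[ Σ_{t=0}^{T-1} γ^t r(s_t, a_t) ]. -/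
/-!
The decomposed estimator is unbiased one factor at a time. Fix a factor `d`.

* Reweighting a trajectory of `πb` by `ρ^d` gives its probability under the hybrid policy that
  uses `πe` on factor `d` and `πb` on every other factor (`trajP_mul_ratio`).
* The transition kernel and the policies factor over `d`, so the law of the `d`-th component of a
  trajectory depends only on the initial distribution and on the `d`-th sub-policy; the hybrid
  policy and `πe` therefore give the same expectation to every function of that component
  (`sum_trajP_proj_congr`, by induction on the horizon, splitting off the last step).

The initial distribution need not factor: the induction never touches it. Averaging over the `N`
independent trajectories reduces to a single one because each trajectory law has total mass one
(`sum_trajP`), and summing over `d` reassembles the reward.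
-/

open scoped BigOperators Classical

/-- A `T`-step trajectory: states `s_0, …, s_T` and actions `a_0, …, a_{T-1}`. -/
abbrev Traj (S A : Type) (T : ℕ) := (Fin (T + 1) → S) × (Fin T → A)

/-- Probability of the trajectory `τ` under initial distribution `d1`, transition kernel
`p` and policy `π`: `P_π(τ) = d1(s_0) ∏_{t=0}^{T-1} π(a_t|s_t) p(s_{t+1}|s_t,a_t)`. -/
def trajP {S A : Type} [Fintype S] [Fintype A] (T : ℕ)
    (d1 : S → ℝ) (p : S → A → S → ℝ) (π : S → A → ℝ) (τ : Traj S A T) : ℝ :=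
  d1 (τ.1 0) *
    ∏ t : Fin T, π (τ.1 t.castSucc) (τ.2 t) * p (τ.1 t.castSucc) (τ.2 t) (τ.1 t.succ)

/-- Under a product of weights whose factors other than the `i`-th have total mass one, the sum of
a function of the `i`-th coordinate is its sum against the `i`-th weight. -/
lemma sum_prod_mul_coord {ι : Type*} [Fintype ι] [DecidableEq ι] {X : ι → Type*}
    [∀ j, Fintype (X j)] (w : ∀ j, X j → ℝ) (i : ι) (hw : ∀ j, j ≠ i → ∑ x, w j x = 1)
    (g : X i → ℝ) :
    ∑ x : ∀ j, X j, (∏ j, w j (x j)) * g (x i) = ∑ y, w i y * g y := by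
  -- absorb `g` into the `i`-th weight, so that the summand is a product over coordinates
  set v : ∀ j, X j → ℝ := Function.update w i (fun y => w i y * g y) with hv
  have hvi : v i = fun y => w i y * g y := by simp [hv]
  have hvj : ∀ j, j ≠ i → v j = w j := fun j hj => by simp [hv, hj]
  have h1 : ∀ x : ∀ j, X j, (∏ j, w j (x j)) * g (x i) = ∏ j, v j (x j) := by
    intro x
    rw [← Finset.mul_prod_erase Finset.univ (fun j => w j (x j)) (Finset.mem_univ i),
      ← Finset.mul_prod_erase Finset.univ (fun j => v j (x j)) (Finset.mem_univ i), hvi]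
    have h2 : ∏ j ∈ Finset.univ.erase i, v j (x j) = ∏ j ∈ Finset.univ.erase i, w j (x j) :=
      Finset.prod_congr rfl fun j hj => by rw [hvj j (Finset.ne_of_mem_erase hj)]
    rw [h2]
    ring
  simp_rw [h1]
  rw [← Fintype.prod_sum, ← Finset.mul_prod_erase Finset.univ _ (Finset.mem_univ i), hvi,
    Finset.prod_eq_one, mul_one]
  intro j hj
  rw [hvj j (Finset.ne_of_mem_erase hj), hw j (Finset.ne_of_mem_erase hj)]

/-- A sum over trajectories of length `T + 1`, split into the first `T` steps, the last action and
the last state. -/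
lemma sum_traj_succ {S A : Type} [Fintype S] [Fintype A] (T : ℕ) (F : Traj S A (T + 1) → ℝ) :
    ∑ τ, F τ = ∑ τ : Traj S A T, ∑ a : A, ∑ s : S,
      F (Fin.snoc (α := fun _ => S) τ.1 s, Fin.snoc (α := fun _ => A) τ.2 a) := by
  rw [Fintype.sum_prod_type, Fintype.sum_prod_type,
    ← (Fin.snocEquiv (fun _ : Fin (T + 2) => S)).sum_comp, Fintype.sum_prod_type,
    Finset.sum_comm]
  refine Finset.sum_congr rfl fun σ _ => ?_
  simp_rw [← (Fin.snocEquiv (fun _ : Fin (T + 1) => A)).sum_comp, Fintype.sum_prod_type]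
  rw [Finset.sum_comm, Finset.sum_comm' (s' := fun _ => Finset.univ) (t' := Finset.univ)
    (by simp) (s := (Finset.univ : Finset (Fin T → A)))]
  refine Finset.sum_congr rfl fun a _ => ?_
  rw [Finset.sum_comm]
  rfl

lemma trajP_snoc {S A : Type} [Fintype S] [Fintype A] (T : ℕ)
    (d1 : S → ℝ) (p : S → A → S → ℝ) (π : S → A → ℝ) (τ : Traj S A T) (a : A) (s : S) :
    trajP (T + 1) d1 p π
        (Fin.snoc (α := fun _ => S) τ.1 s, Fin.snoc (α := fun _ => A) τ.2 a) =
      trajP T d1 p π τ * (π (τ.1 (Fin.last T)) a * p (τ.1 (Fin.last T)) a s) := by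
  have h0 : (Fin.snoc (α := fun _ => S) τ.1 s : Fin (T + 2) → S) 0 = τ.1 0 := by
    rw [← Fin.castSucc_zero, Fin.snoc_castSucc]
  simp only [trajP, Fin.prod_univ_castSucc (n := T), h0, Fin.succ_castSucc, Fin.snoc_castSucc,
    Fin.succ_last, Fin.snoc_last, mul_assoc]

lemma sum_trajP {S A : Type} [Fintype S] [Fintype A] (T : ℕ)
    (d1 : S → ℝ) (p : S → A → S → ℝ) (π : S → A → ℝ) (hd1 : ∑ s, d1 s = 1)
    (hp : ∀ s a, ∑ s', p s a s' = 1) (hπ : ∀ s, ∑ a, π s a = 1) :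
    ∑ τ, trajP T d1 p π τ = 1 := by
  induction T with
  | zero =>
    rw [Fintype.sum_prod_type, ← (Equiv.funUnique (Fin 1) S).symm.sum_comp]
    simpa [trajP] using hd1
  | succ T ih =>
    rw [sum_traj_succ]
    simp_rw [trajP_snoc, ← Finset.mul_sum, hp, mul_one, hπ, mul_one]
    exact ih

/-- The `d`-th component of a trajectory of a factored process. -/
def Traj.proj {ι : Type} {Z Act : ι → Type} {T : ℕ} (d : ι)
    (τ : Traj (∀ j, Z j) (∀ j, Act j) T) : Traj (Z d) (Act d) T :=
  (fun t => τ.1 t d, fun t => τ.2 t d)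

lemma Traj.proj_snoc {ι : Type} {Z Act : ι → Type} {T : ℕ} (d : ι)
    (τ : Traj (∀ j, Z j) (∀ j, Act j) T) (a : ∀ j, Act j) (s : ∀ j, Z j) :
    Traj.proj d ((Fin.snoc (α := fun _ => ∀ j, Z j) τ.1 s,
        Fin.snoc (α := fun _ => ∀ j, Act j) τ.2 a) : Traj _ _ (T + 1)) =
      (Fin.snoc (α := fun _ => Z d) (Traj.proj d τ).1 (s d),
        Fin.snoc (α := fun _ => Act d) (Traj.proj d τ).2 (a d)) := by
  refine Prod.ext (funext fun t => ?_) (funext fun t => ?_) <;>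
    induction t using Fin.lastCases <;> simp [Traj.proj]

/-- In a factored process, the expectation of a function of the `d`-th component of the trajectory
depends on the policy only through its `d`-th sub-policy. -/
lemma sum_trajP_proj_congr {D : ℕ} {Z Act : Fin D → Type}
    [∀ d, Fintype (Z d)] [∀ d, Fintype (Act d)] (T : ℕ) (d1 : (∀ d, Z d) → ℝ)
    (pd : ∀ d, Z d → Act d → Z d → ℝ) (hpd : ∀ d z a, ∑ z', pd d z a z' = 1)
    (π π' : ∀ d, Z d → Act d → ℝ) (hπ : ∀ d z, ∑ a, π d z a = 1)
    (hπ' : ∀ d z, ∑ a, π' d z a = 1) (d : Fin D) (h : π d = π' d)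
    (f : Traj (Z d) (Act d) T → ℝ) :
    ∑ τ, trajP T d1 (fun s a s' => ∏ j, pd j (s j) (a j) (s' j))
        (fun s a => ∏ j, π j (s j) (a j)) τ * f (τ.proj d) =
      ∑ τ, trajP T d1 (fun s a s' => ∏ j, pd j (s j) (a j) (s' j))
        (fun s a => ∏ j, π' j (s j) (a j)) τ * f (τ.proj d) := by
  -- integrating out one step leaves a function of the `d`-th component of the past
  have step : ∀ (π : ∀ d, Z d → Act d → ℝ), (∀ d z, ∑ a, π d z a = 1) →
      ∀ (s : ∀ j, Z j) (g : Act d → Z d → ℝ),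
      ∑ a : ∀ j, Act j, ∑ s' : ∀ j, Z j,
        ((∏ j, π j (s j) (a j)) * ∏ j, pd j (s j) (a j) (s' j)) * g (a d) (s' d) =
      ∑ a, π d (s d) a * ∑ z, pd d (s d) a z * g a z := by
    intro π hπ s g
    rw [← sum_prod_mul_coord (fun j => π j (s j)) d (fun j _ => hπ j (s j))
      (fun a => ∑ z, pd d (s d) a z * g a z)]
    refine Finset.sum_congr rfl fun a _ => ?_
    rw [← sum_prod_mul_coord (fun j => pd j (s j) (a j)) d (fun j _ => hpd j (s j) (a j))
      (fun z => g (a d) z), Finset.mul_sum]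
    simp_rw [mul_assoc]
  induction T with
  | zero => simp [trajP]
  | succ T ih =>
    have key : ∀ (π : ∀ d, Z d → Act d → ℝ), (∀ d z, ∑ a, π d z a = 1) →
        ∑ τ, trajP (T + 1) d1 (fun s a s' => ∏ j, pd j (s j) (a j) (s' j))
          (fun s a => ∏ j, π j (s j) (a j)) τ * f (τ.proj d) =
        ∑ τ, trajP T d1 (fun s a s' => ∏ j, pd j (s j) (a j) (s' j))
          (fun s a => ∏ j, π j (s j) (a j)) τ *
          (fun σ : Traj (Z d) (Act d) T => ∑ a, π d (σ.1 (Fin.last T)) a *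
            ∑ z, pd d (σ.1 (Fin.last T)) a z *
              f (Fin.snoc (α := fun _ => Z d) σ.1 z, Fin.snoc (α := fun _ => Act d) σ.2 a))
          (τ.proj d) := by
      intro π hπ
      rw [sum_traj_succ]
      refine Finset.sum_congr rfl fun τ _ => ?_
      refine Eq.trans ?_ (congrArg _ (step π hπ (τ.1 (Fin.last T)) fun a z =>
        f (Fin.snoc (α := fun _ => Z d) (τ.proj d).1 z,
          Fin.snoc (α := fun _ => Act d) (τ.proj d).2 a)))
      simp_rw [trajP_snoc, Traj.proj_snoc, Finset.mul_sum, mul_assoc]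
    rw [key π hπ, key π' hπ', h]
    exact ih fun σ => ∑ a, π' d (σ.1 (Fin.last T)) a * ∑ z, pd d (σ.1 (Fin.last T)) a z *
      f (Fin.snoc (α := fun _ => Z d) σ.1 z, Fin.snoc (α := fun _ => Act d) σ.2 a)

/-- Reweighting by the importance ratio of factor `d` changes the `d`-th sub-policy from `πb d` to
`πe d`. Positivity of the denominators is not needed: where `πb d` vanishes so does `πe d`, and the
ratio is `0 / 0 = 0`. -/
lemma trajP_mul_ratio {D : ℕ} {Z Act : Fin D → Type}
    [∀ d, Fintype (Z d)] [∀ d, Fintype (Act d)] (T : ℕ) (d1 : (∀ d, Z d) → ℝ)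
    (p : (∀ d, Z d) → (∀ d, Act d) → (∀ d, Z d) → ℝ)
    (πb πe : ∀ d, Z d → Act d → ℝ) (habs : ∀ d z a, πb d z a = 0 → πe d z a = 0)
    (d : Fin D) (τ : Traj (∀ d, Z d) (∀ d, Act d) T) :
    trajP T d1 p (fun s a => ∏ j, πb j (s j) (a j)) τ *
        ∏ t : Fin T, πe d (τ.1 t.castSucc d) (τ.2 t d) / πb d (τ.1 t.castSucc d) (τ.2 t d) =
      trajP T d1 p (fun s a => ∏ j, Function.update πb d (πe d) j (s j) (a j)) τ := by
  unfold trajP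
  rw [mul_assoc, ← Finset.prod_mul_distrib]
  congr 1
  refine Finset.prod_congr rfl fun t _ => ?_
  beta_reduce
  rw [← Finset.mul_prod_erase Finset.univ
      (fun j => πb j (τ.1 t.castSucc j) (τ.2 t j)) (Finset.mem_univ d),
    ← Finset.mul_prod_erase Finset.univ
      (fun j => Function.update πb d (πe d) j (τ.1 t.castSucc j) (τ.2 t j)) (Finset.mem_univ d),
    Function.update_self]
  have hothers : ∏ j ∈ Finset.univ.erase d,
      Function.update πb d (πe d) j (τ.1 t.castSucc j) (τ.2 t j) =
      ∏ j ∈ Finset.univ.erase d, πb j (τ.1 t.castSucc j) (τ.2 t j) :=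
    Finset.prod_congr rfl fun j hj => by
      rw [Function.update_of_ne (Finset.ne_of_mem_erase hj)]
  rw [hothers]
  by_cases h0 : πb d (τ.1 t.castSucc d) (τ.2 t d) = 0
  · simp [h0, habs _ _ _ h0]
  · field_simp

/-- In a `D`-factored finite MDP, with factored behaviour and evaluation
policies satisfying per-factor absolute continuity, the decomposed importance-sampling
estimator computed from `N` i.i.d. trajectories drawn from `π_b` is an unbiased estimator
of the value `V_{π_e}` of the evaluation policy. -/
theorem decomposed_IS_unbiased
    {D : ℕ} (Z Act : Fin D → Type)
    [∀ d, Fintype (Z d)] [∀ d, Fintype (Act d)]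
    [∀ d, Nonempty (Z d)] [∀ d, Nonempty (Act d)]
    (T N : ℕ) (hN : 0 < N)
    (γ : ℝ) (hγ0 : 0 ≤ γ) (hγ1 : γ ≤ 1)
    -- initial distribution
    (d1 : (∀ d, Z d) → ℝ) (hd1_nonneg : ∀ s, 0 ≤ d1 s) (hd1_sum : ∑ s, d1 s = 1)
    -- full MDP transition kernel and reward
    (p : (∀ d, Z d) → (∀ d, Act d) → (∀ d, Z d) → ℝ)
    (r : (∀ d, Z d) → (∀ d, Act d) → ℝ)
    -- factored structure
    (pd : ∀ d, Z d → Act d → Z d → ℝ)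
    (rd : ∀ d, Z d → Act d → ℝ)
    (hpd_nonneg : ∀ d z a z', 0 ≤ pd d z a z')
    (hpd_sum : ∀ d z a, ∑ z', pd d z a z' = 1)
    (hp : ∀ s a s', p s a s' = ∏ d, pd d (s d) (a d) (s' d))
    (hr : ∀ s a, r s a = ∑ d, rd d (s d) (a d))
    -- factored behaviour and evaluation policies
    (πb πe : (∀ d, Z d) → (∀ d, Act d) → ℝ)
    (πbd πed : ∀ d, Z d → Act d → ℝ)
    (hπbd_nonneg : ∀ d z a, 0 ≤ πbd d z a) (hπbd_sum : ∀ d z, ∑ a, πbd d z a = 1)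
    (hπed_nonneg : ∀ d z a, 0 ≤ πed d z a) (hπed_sum : ∀ d z, ∑ a, πed d z a = 1)
    (hπb : ∀ s a, πb s a = ∏ d, πbd d (s d) (a d))
    (hπe : ∀ s a, πe s a = ∏ d, πed d (s d) (a d))
    -- per-factor absolute continuity
    (habs : ∀ d z a, πbd d z a = 0 → πed d z a = 0) :
    -- expectation (over N i.i.d. trajectories from π_b) of the decomposed IS estimator
    (∑ τs : Fin N → Traj (∀ d, Z d) (∀ d, Act d) T,
        (∏ n, trajP T d1 p πb (τs n)) *
          (∑ d, (1 / (N : ℝ)) * ∑ n,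
            (if 0 < trajP T d1 p πb (τs n) then
                ∏ t' : Fin T,
                  πed d ((τs n).1 t'.castSucc d) ((τs n).2 t' d) /
                    πbd d ((τs n).1 t'.castSucc d) ((τs n).2 t' d)
              else 0) *
              ∑ t : Fin T, γ ^ (t : ℕ) * rd d ((τs n).1 t.castSucc d) ((τs n).2 t d)))
    -- equals the value of the evaluation policy
    = ∑ τ : Traj (∀ d, Z d) (∀ d, Act d) T,
        trajP T d1 p πe τ * ∑ t : Fin T, γ ^ (t : ℕ) * r (τ.1 t.castSucc) (τ.2 t) := by
  obtain rfl : p = fun s a s' => ∏ d, pd d (s d) (a d) (s' d) := by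
    funext s a s'; exact hp s a s'
  obtain rfl : πb = fun s a => ∏ d, πbd d (s d) (a d) := by funext s a; exact hπb s a
  obtain rfl : πe = fun s a => ∏ d, πed d (s d) (a d) := by funext s a; exact hπe s a
  set P := trajP T d1 (fun s (a : ∀ d, Act d) s' => ∏ d, pd d (s d) (a d) (s' d))
    (fun s (a : ∀ d, Act d) => ∏ d, πbd d (s d) (a d)) with hP
  have hPnn : ∀ τ, 0 ≤ P τ := fun τ =>
    mul_nonneg (hd1_nonneg _) (Finset.prod_nonneg fun t _ => mul_nonneg
      (Finset.prod_nonneg fun j _ => hπbd_nonneg _ _ _)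
      (Finset.prod_nonneg fun j _ => hpd_nonneg _ _ _ _))
  have hPsum : ∑ τ, P τ = 1 := by
    refine sum_trajP T d1 _ _ hd1_sum (fun s a => ?_) (fun s => ?_)
    · rw [← Fintype.prod_sum fun j => pd j (s j) (a j)]
      simp [hpd_sum]
    · rw [← Fintype.prod_sum fun j => πbd j (s j)]
      simp [hπbd_sum]
  -- the contribution of factor `d` to the estimator along a single trajectory
  set G : Fin D → Traj (∀ d, Z d) (∀ d, Act d) T → ℝ := fun d τ =>
    (if 0 < P τ then ∏ t' : Fin T, πed d (τ.1 t'.castSucc d) (τ.2 t' d) /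
      πbd d (τ.1 t'.castSucc d) (τ.2 t' d) else 0) *
      ∑ t : Fin T, γ ^ (t : ℕ) * rd d (τ.1 t.castSucc d) (τ.2 t d) with hG
  have hone : ∀ d, ∑ τ, P τ * G d τ = ∑ τ : Traj (∀ d, Z d) (∀ d, Act d) T, trajP T d1
      (fun s a s' => ∏ d, pd d (s d) (a d) (s' d)) (fun s a => ∏ d, πed d (s d) (a d)) τ *
        ∑ t : Fin T, γ ^ (t : ℕ) * rd d (τ.1 t.castSucc d) (τ.2 t d) := by
    intro d
    have hhyb : ∀ j z, ∑ a, Function.update πbd d (πed d) j z a = 1 := by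
      intro j z
      rcases eq_or_ne j d with rfl | hj
      · simp [hπed_sum]
      · simp [hj, hπbd_sum]
    refine Eq.trans (Finset.sum_congr rfl fun τ _ => ?_)
      (sum_trajP_proj_congr T d1 pd hpd_sum (Function.update πbd d (πed d)) πed hhyb hπed_sum d
        (by simp) fun σ => ∑ t : Fin T, γ ^ (t : ℕ) * rd d (σ.1 t.castSucc) (σ.2 t))
    rw [← trajP_mul_ratio T d1 _ πbd πed habs d τ, ← hP, hG]
    rcases (hPnn τ).eq_or_lt with h | h
    · simp [← h]
    · simp only [if_pos h, mul_assoc]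
      rfl
  have hiid : ∀ d n, ∑ τs : Fin N → Traj (∀ d, Z d) (∀ d, Act d) T,
      (∏ n, P (τs n)) * G d (τs n) = ∑ τ, P τ * G d τ := fun d n =>
    sum_prod_mul_coord (fun _ : Fin N => P) n (fun _ _ => hPsum) (G d)
  have hN' : (N : ℝ) ≠ 0 := by exact_mod_cast hN.ne'
  calc _ = ∑ τs : Fin N → Traj (∀ d, Z d) (∀ d, Act d) T,
        (∏ n, P (τs n)) * ∑ d, (1 / (N : ℝ)) * ∑ n, G d (τs n) := rfl
    _ = ∑ d, (1 / (N : ℝ)) * ∑ n, ∑ τs : Fin N → Traj (∀ d, Z d) (∀ d, Act d) T,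
        (∏ n, P (τs n)) * G d (τs n) := by
      simp_rw [Finset.mul_sum]
      rw [Finset.sum_comm]
      refine Finset.sum_congr rfl fun d _ => ?_
      rw [Finset.sum_comm]
      simp_rw [mul_left_comm]
    _ = ∑ d, ∑ τ, P τ * G d τ := by
      simp_rw [hiid]
      simp [hN']
    _ = _ := by
      simp_rw [hone, hr]
      rw [Finset.sum_comm]
      refine Finset.sum_congr rfl fun τ _ => ?_
      rw [← Finset.mul_sum, Finset.sum_comm]
      simp_rw [Finset.mul_sum]
end

section
/- Let M be a finite MDP and let π_b, π_e be policies with π_e absolutely continuous with respect to π_b (π_b(a|s) = 0 ⟹ π_e(a|s) = 0 for all s, a). Then for every 0 ≤ t ≤ T−1 and every function g : S × A → ℝ, the per-decision importance weight up to time t suffices to re-weight the time-t reward: E_{τ∼P^τ_{π_b}}[ ρ_{0:t}(τ) · g(s_t, a_t) ] = E_{τ∼P^τ_{π_e}}[ g(s_t, a_t) ], where ρ_{0:t}(τ) = ∏_{t'=0}^{t} π_e(a_{t'}|s_{t'}) / π_b(a_{t'}|s_{t'}) on trajectories of positive P_{π_b}-probability and ρ = 0 otherwise. In particular, taking g = r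 over all t, the per-decision importance-sampling estimator Σ_{t=0}^{T-1} γ^t ρ_{0:t}(τ) r(s_t, a_t) is an unbiased estimator of V_{π_e}. -/
/-!
Fix `t`. Multiplying `P_{π_b}(τ)` by `ρ_{0:t}(τ)` turns it into the weight of `τ` under the
nonstationary policy that follows `π_e` up to time `t` and `π_b` afterwards (`trajP_mul_rhoPD`);
absolute continuity is what makes this hold on trajectories of zero `π_b`-probability as well.
The expectation of a function of `(s_t, a_t)` does not see the policy after time `t`
(`sum_trajW_congr`): the last action and the last state sum out to `1`, so the horizon can be
shortened until `t` is the last step. The statement about the estimator of the value is linearity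
of finite sums.
-/

open scoped BigOperators Classical

/-- The per-decision importance weight `ρ_{0:t}(τ)`: the product over `t' ≤ t` of
`π_e(a_{t'}|s_{t'}) / π_b(a_{t'}|s_{t'})` on trajectories of positive behaviour
probability, and `0` otherwise. -/
noncomputable def rhoPD {S A : Type} [Fintype S] [Fintype A] {T : ℕ}
    (d1 : S → ℝ) (p : S → A → S → ℝ) (πb πe : S → A → ℝ)
    (t : Fin T) (τ : Traj S A T) : ℝ :=
  if 0 < trajP T d1 p πb τ then
    ∏ t' ∈ Finset.Iic t, πe (τ.1 t'.castSucc) (τ.2 t') / πb (τ.1 t'.castSucc) (τ.2 t')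
  else 0

/-- The weight of the trajectory `τ` when actions are drawn from the time-dependent policy `μ`
(`μ i` is used at time `i`). -/
def trajW {S A : Type} {T : ℕ} (d1 : S → ℝ) (p : S → A → S → ℝ) (μ : Fin T → S → A → ℝ)
    (τ : Traj S A T) : ℝ :=
  d1 (τ.1 0) *
    ∏ i : Fin T, μ i (τ.1 i.castSucc) (τ.2 i) * p (τ.1 i.castSucc) (τ.2 i) (τ.1 i.succ)

/-- Marginalisation of the last step: the last action and the last state sum out. -/
lemma sum_trajW_succ {S A : Type} [Fintype S] [Fintype A] {T : ℕ} (d1 : S → ℝ)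
    (p : S → A → S → ℝ) (hp_sum : ∀ s a, ∑ s', p s a s' = 1)
    (μ : Fin (T + 1) → S → A → ℝ) (hμ : ∀ s, ∑ a, μ (Fin.last T) s a = 1)
    (t : Fin T) (g : S → A → ℝ) :
    ∑ τ : Traj S A (T + 1),
        trajW d1 p μ τ * g (τ.1 t.castSucc.castSucc) (τ.2 t.castSucc)
      = ∑ τ : Traj S A T,
        trajW d1 p (fun i => μ i.castSucc) τ * g (τ.1 t.castSucc) (τ.2 t) := by
  let e : (S × (Fin (T + 1) → S)) ≃ (Fin (T + 2) → S) := Fin.snocEquiv (fun _ => S)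
  let e' : (A × (Fin T → A)) ≃ (Fin (T + 1) → A) := Fin.snocEquiv (fun _ => A)
  have hsplit : ∀ (x : S) (u : Fin (T + 1) → S) (a : A) (v : Fin T → A),
      trajW d1 p μ (e (x, u), e' (a, v)) *
          g (e (x, u) t.castSucc.castSucc) (e' (a, v) t.castSucc)
        = trajW d1 p (fun i => μ i.castSucc) (u, v) * g (u t.castSucc) (v t) *
          (μ (Fin.last T) (u (Fin.last T)) a * p (u (Fin.last T)) a x) := by
    intro x u a v
    have h1 : ∀ i, e (x, u) (Fin.castSucc i) = u i := fun i => by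
      simp [e, Fin.snocEquiv]
    have h2 : e (x, u) (Fin.last _) = x := by simp [e, Fin.snocEquiv]
    have h3 : ∀ i, e' (a, v) (Fin.castSucc i) = v i := fun i => by
      simp [e', Fin.snocEquiv]
    have h4 : e' (a, v) (Fin.last _) = a := by simp [e', Fin.snocEquiv]
    have h0 : e (x, u) 0 = u 0 := h1 0
    simp only [trajW, Fin.prod_univ_castSucc, Fin.succ_castSucc, Fin.succ_last, h0, h1, h2, h3, h4]
    ring
  have hone : ∀ s : S, ∑ a, ∑ x, μ (Fin.last T) s a * p s a x = 1 := by
    intro s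
    simp only [← Finset.mul_sum, hp_sum, mul_one, hμ]
  rw [← Equiv.sum_comp (Equiv.prodCongr e e')]
  simp only [Fintype.sum_prod_type, Equiv.prodCongr_apply, Prod.map_apply, hsplit]
  rw [Finset.sum_comm]
  refine Finset.sum_congr rfl fun u _ => ?_
  calc ∑ x, ∑ a, ∑ v, trajW d1 p (fun i => μ i.castSucc) (u, v) * g (u t.castSucc) (v t) *
          (μ (Fin.last T) (u (Fin.last T)) a * p (u (Fin.last T)) a x)
      = (∑ v, trajW d1 p (fun i => μ i.castSucc) (u, v) * g (u t.castSucc) (v t)) *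
          ∑ a, ∑ x, μ (Fin.last T) (u (Fin.last T)) a * p (u (Fin.last T)) a x := by
        rw [Finset.sum_comm, Finset.mul_sum]
        refine Finset.sum_congr rfl fun a _ => ?_
        rw [Finset.mul_sum]
        exact Finset.sum_congr rfl fun x _ => (Finset.sum_mul ..).symm
    _ = _ := by rw [hone, mul_one]

/-- The expectation of a function of `(s_t, a_t)` does not depend on the policy used after
time `t`. -/
lemma sum_trajW_congr {S A : Type} [Fintype S] [Fintype A] {T : ℕ} (d1 : S → ℝ)
    (p : S → A → S → ℝ) (hp_sum : ∀ s a, ∑ s', p s a s' = 1)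
    (μ ν : Fin T → S → A → ℝ) (hμ : ∀ i s, ∑ a, μ i s a = 1) (hν : ∀ i s, ∑ a, ν i s a = 1)
    (t : Fin T) (h : ∀ i ≤ t, μ i = ν i) (g : S → A → ℝ) :
    ∑ τ : Traj S A T, trajW d1 p μ τ * g (τ.1 t.castSucc) (τ.2 t)
      = ∑ τ : Traj S A T, trajW d1 p ν τ * g (τ.1 t.castSucc) (τ.2 t) := by
  induction T with
  | zero => exact t.elim0
  | succ T ih =>
    induction t using Fin.lastCases with
    | last =>
      obtain rfl : μ = ν := funext fun i => h i (Fin.le_last i)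
      rfl
    | cast t =>
      rw [sum_trajW_succ d1 p hp_sum μ (hμ _), sum_trajW_succ d1 p hp_sum ν (hν _)]
      exact ih _ _ (fun i => hμ _) (fun i => hν _) t
        (fun i hi => h _ (Fin.castSucc_le_castSucc_iff.2 hi))

/-- Reweighting by `ρ_{0:t}` replaces the behaviour policy by the evaluation policy at the times
up to `t`. -/
lemma trajP_mul_rhoPD {S A : Type} [Fintype S] [Fintype A] {T : ℕ} (d1 : S → ℝ)
    (hd1_nonneg : ∀ s, 0 ≤ d1 s) (p : S → A → S → ℝ) (hp_nonneg : ∀ s a s', 0 ≤ p s a s')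
    (πb πe : S → A → ℝ) (hπb_nonneg : ∀ s a, 0 ≤ πb s a)
    (habs : ∀ s a, πb s a = 0 → πe s a = 0) (t : Fin T) (τ : Traj S A T) :
    trajP T d1 p πb τ * rhoPD d1 p πb πe t τ
      = trajW d1 p (fun i => if i ≤ t then πe else πb) τ := by
  have hnonneg : 0 ≤ trajP T d1 p πb τ :=
    mul_nonneg (hd1_nonneg _)
      (Finset.prod_nonneg fun i _ => mul_nonneg (hπb_nonneg _ _) (hp_nonneg _ _ _))
  rcases hnonneg.eq_or_lt with h0 | hpos
  · rw [← h0, zero_mul, eq_comm]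
    -- A vanishing factor of `P_{π_b}(τ)` also vanishes after the replacement of `π_b` by `π_e`.
    rcases mul_eq_zero.1 h0.symm with hd | hprod
    · rw [trajW, hd, zero_mul]
    · obtain ⟨i, -, hi⟩ := Finset.prod_eq_zero_iff.1 hprod
      refine mul_eq_zero_of_right _ (Finset.prod_eq_zero (Finset.mem_univ i) ?_)
      rcases mul_eq_zero.1 hi with hb | hp
      · have he := habs _ _ hb
        by_cases hit : i ≤ t <;> simp [hit, hb, he]
      · rw [hp, mul_zero]
  · have hb : ∀ i : Fin T, πb (τ.1 i.castSucc) (τ.2 i) ≠ 0 := fun i =>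
      left_ne_zero_of_mul
        (Finset.prod_ne_zero_iff.1 (right_ne_zero_of_mul hpos.ne') i (Finset.mem_univ i))
    have hIic : Finset.Iic t = Finset.univ.filter (fun i => i ≤ t) := by ext i; simp
    rw [rhoPD, if_pos hpos, hIic, Finset.prod_filter, trajP, trajW, mul_assoc,
      ← Finset.prod_mul_distrib]
    refine congrArg _ (Finset.prod_congr rfl fun i _ => ?_)
    have hbi := hb i
    by_cases hit : i ≤ t
    · simp only [hit, if_true]
      field_simp
    · simp only [hit, if_false, mul_one]

/-- For a finite MDP and policies `π_b`, `π_e` with `π_e` absolutely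
continuous with respect to `π_b`: for every `0 ≤ t ≤ T−1` and every `g : S × A → ℝ`,
`E_{τ∼P^τ_{π_b}}[ρ_{0:t}(τ) g(s_t, a_t)] = E_{τ∼P^τ_{π_e}}[g(s_t, a_t)]`.
In particular, the per-decision importance-sampling estimator
`∑_t γ^t ρ_{0:t}(τ) r(s_t, a_t)` is an unbiased estimator of `V_{π_e}`. -/
theorem per_decision_IS_unbiased
    {S A : Type} [Fintype S] [Fintype A] [Nonempty S] [Nonempty A]
    (T : ℕ)
    (d1 : S → ℝ) (hd1_nonneg : ∀ s, 0 ≤ d1 s) (hd1_sum : ∑ s, d1 s = 1)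
    (p : S → A → S → ℝ)
    (hp_nonneg : ∀ s a s', 0 ≤ p s a s') (hp_sum : ∀ s a, ∑ s', p s a s' = 1)
    (r : S → A → ℝ) (γ : ℝ) (hγ0 : 0 ≤ γ) (hγ1 : γ ≤ 1)
    (πb πe : S → A → ℝ)
    (hπb_nonneg : ∀ s a, 0 ≤ πb s a) (hπb_sum : ∀ s, ∑ a, πb s a = 1)
    (hπe_nonneg : ∀ s a, 0 ≤ πe s a) (hπe_sum : ∀ s, ∑ a, πe s a = 1)
    -- absolute continuity
    (habs : ∀ s a, πb s a = 0 → πe s a = 0) :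
    -- the per-decision weight up to time t suffices to re-weight the time-t reward
    (∀ (t : Fin T) (g : S → A → ℝ),
      (∑ τ : Traj S A T,
          trajP T d1 p πb τ * (rhoPD d1 p πb πe t τ * g (τ.1 t.castSucc) (τ.2 t)))
        = ∑ τ : Traj S A T, trajP T d1 p πe τ * g (τ.1 t.castSucc) (τ.2 t)) ∧
    -- in particular, the per-decision IS estimator is unbiased for V_{π_e}
    (∑ τ : Traj S A T,
        trajP T d1 p πb τ *
          ∑ t : Fin T, γ ^ (t : ℕ) * (rhoPD d1 p πb πe t τ * r (τ.1 t.castSucc) (τ.2 t)))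
      = ∑ τ : Traj S A T,
          trajP T d1 p πe τ * ∑ t : Fin T, γ ^ (t : ℕ) * r (τ.1 t.castSucc) (τ.2 t) := by
  have key : ∀ (t : Fin T) (g : S → A → ℝ),
      (∑ τ : Traj S A T,
          trajP T d1 p πb τ * (rhoPD d1 p πb πe t τ * g (τ.1 t.castSucc) (τ.2 t)))
        = ∑ τ : Traj S A T, trajP T d1 p πe τ * g (τ.1 t.castSucc) (τ.2 t) := by
    intro t g
    simp only [← mul_assoc,
      trajP_mul_rhoPD d1 hd1_nonneg p hp_nonneg πb πe hπb_nonneg habs t]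
    refine sum_trajW_congr d1 p hp_sum _ (fun _ => πe) (fun i s => ?_) (fun _ => hπe_sum) t
      (fun i hi => if_pos hi) g
    by_cases hit : i ≤ t
    · simp only [hit, if_true, hπe_sum]
    · simp only [hit, if_false, hπb_sum]
  refine ⟨key, ?_⟩
  simp only [Finset.mul_sum]
  rw [Finset.sum_comm]
  symm
  rw [Finset.sum_comm]
  refine Finset.sum_congr rfl fun t _ => ?_
  simp only [mul_left_comm _ (γ ^ (t : ℕ)), ← Finset.mul_sum, key t r]
end
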